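/- arXiv:math/0005130 — 6 statements merged into one kernel-verified Lean document; each statement's English description precedes it below -/
import Mathlib

section
/- Let E be a real Banach space, T a strongly continuous semigroup on E, and A its generator with domain D(A). Then D(A) = E if and only if T is uniformly continuous, i.e. the operator norm ‖T(t) − id‖ tends to 0 as t → 0⁺. -/
open Filter Topology

/-- `HasGen T f g` means `g = A f` where `A` is the generator of the semigroup `T`,
i.e. `(T h f - f)/h → g` in norm as `h → 0⁺`. -/
def HasGen {E : Type*} [NormedAddCommGroup E] [NormedSpace ℝ E]
    (T : ℝ → E →L[ℝ] E) (f g : E) : Prop :=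
  Tendsto (fun h : ℝ => h⁻¹ • (T h f - f)) (𝓝[>] (0 : ℝ)) (𝓝 g)

/-!
If `D(A) = E`, the difference quotients `(T h - 1)/h` converge pointwise, so by the uniform
boundedness principle they are bounded in norm as `h → 0⁺`, and `T h - 1` is `h` times a bounded
quantity.

Conversely, let `T` be norm-continuous at `0⁺` and put `V t = ∫₀ᵗ T s ds`. The semigroup law gives
`(T h - 1) V t = ∫ₜᵗ⁺ʰ T s ds - ∫₀ʰ T s ds`, which divided by `h` tends to `T t - 1`. Since
`V t / t → 1` in norm, some `V t` is invertible, so `(T h - 1)/h` converges in operator norm to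
`(T t - 1) (V t)⁻¹`.
-/

section UniformBoundedness

variable {ι 𝕜₁ 𝕜₂ E F : Type*} [NontriviallyNormedField 𝕜₁] [NontriviallyNormedField 𝕜₂]
  {σ : 𝕜₁ →+* 𝕜₂} [RingHomIsometric σ] [SeminormedAddCommGroup E] [CompleteSpace E]
  [NormedSpace 𝕜₁ E] [SeminormedAddCommGroup F] [NormedSpace 𝕜₂ F]

theorem isBoundedUnder_norm_of_forall_isBoundedUnder_norm_apply {l : Filter ι}
    [l.IsCountablyGenerated] {D : ι → E →SL[σ] F}
    (hD : ∀ x, l.IsBoundedUnder (· ≤ ·) fun i => ‖D i x‖) :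
    l.IsBoundedUnder (· ≤ ·) fun i => ‖D i‖ := by
  by_contra h_unbounded
  have h_freq (n : ℕ) : ∃ᶠ i in l, (n : ℝ) < ‖D i‖ := fun h =>
    h_unbounded ⟨n, eventually_map.2 (h.mono fun _ => le_of_not_gt)⟩
  obtain ⟨B, hB⟩ := l.exists_antitone_basis
  choose u hu_large hu_mem using fun n =>
    ((h_freq n).and_eventually (hB.toHasBasis.mem_of_mem trivial)).exists
  have hu : Tendsto u atTop l := hB.tendsto hu_mem
  obtain ⟨C, hC⟩ := banach_steinhaus (g := D ∘ u) fun x => by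
    have h_seq : atTop.IsBoundedUnder (· ≤ ·) fun n => ‖D (u n) x‖ :=
      hu.isBoundedUnder_comp (hD x)
    obtain ⟨C, hC⟩ := h_seq.bddAbove_range
    exact ⟨C, fun n => hC ⟨n, rfl⟩⟩
  obtain ⟨n, hn⟩ := exists_nat_gt C
  exact ((hn.trans (hu_large n)).trans_le (hC n)).false

end UniformBoundedness

theorem tendsto_norm_sub_one_of_forall_exists_hasGen {E : Type*} [NormedAddCommGroup E]
    [NormedSpace ℝ E] [CompleteSpace E] {T : ℝ → E →L[ℝ] E} (hT : ∀ f, ∃ g, HasGen T f g) :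
    Tendsto (fun t => ‖T t - 1‖) (𝓝[>] 0) (𝓝 0) := by
  have h_bounded : (𝓝[>] (0 : ℝ)).IsBoundedUnder (· ≤ ·) fun h => ‖h⁻¹ • (T h - 1)‖ :=
    isBoundedUnder_norm_of_forall_isBoundedUnder_norm_apply fun f =>
      let ⟨_, hg⟩ := hT f
      hg.norm.isBoundedUnder_le
  have h_smul : Tendsto (fun h : ℝ => h • h⁻¹ • (T h - 1)) (𝓝[>] 0) (𝓝 0) :=
    (tendsto_nhdsWithin_of_tendsto_nhds tendsto_id).zero_smul_isBoundedUnder_le h_bounded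
  refine (tendsto_zero_iff_norm_tendsto_zero.1 h_smul).congr' ?_
  filter_upwards [self_mem_nhdsWithin] with h hh
  rw [smul_inv_smul₀ (ne_of_gt hh)]

section Shift

variable {G : Type*} [AddCommGroup G] [PartialOrder G] [IsOrderedAddMonoid G]
  [TopologicalSpace G] [IsTopologicalAddGroup G] (a : G)

theorem tendsto_add_left_nhdsGT_zero : Tendsto (fun h => a + h) (𝓝[>] 0) (𝓝[>] a) := by
  have h_maps : Set.MapsTo (a + ·) (Set.Ioi 0) (Set.Ioi a) := fun _ => lt_add_of_pos_right a
  simpa using (continuous_const_add a).continuousWithinAt (x := 0) |>.tendsto_nhdsWithin h_maps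

theorem tendsto_sub_right_nhdsGT_zero : Tendsto (fun u => u - a) (𝓝[>] a) (𝓝[>] 0) := by
  have h_maps : Set.MapsTo (· - a) (Set.Ioi a) (Set.Ioi 0) := fun _ => sub_pos.2
  simpa using (continuous_sub_right a).continuousWithinAt (x := a) |>.tendsto_nhdsWithin h_maps

theorem tendsto_sub_left_nhdsLT_zero : Tendsto (fun u => a - u) (𝓝[<] a) (𝓝[>] 0) := by
  have h_maps : Set.MapsTo (a - ·) (Set.Iio a) (Set.Ioi 0) := fun _ => sub_pos.2
  simpa using (continuous_sub_left a).continuousWithinAt (x := a) |>.tendsto_nhdsWithin h_maps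

end Shift

theorem tendsto_inv_smul_integral_nhdsGT {F : Type*} [NormedAddCommGroup F] [NormedSpace ℝ F]
    [CompleteSpace F] {f : ℝ → F} {a : ℝ} (hf : ContinuousOn f (Set.Ici a)) :
    Tendsto (fun h : ℝ => h⁻¹ • ∫ s in a..a + h, f s) (𝓝[>] 0) (𝓝 (f a)) := by
  have h_deriv : HasDerivWithinAt (fun u => ∫ s in a..u, f s) (f a) (Set.Ioi a) a :=
    (intervalIntegral.integral_hasDerivWithinAt_right .refl
      ((hf.mono Set.Ioi_subset_Ici_self).stronglyMeasurableAtFilter_nhdsWithin measurableSet_Ioi a)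
      ((hf a Set.self_mem_Ici).mono Set.Ioi_subset_Ici_self)).Ioi_of_Ici
  have h_slope := (hasDerivWithinAt_iff_tendsto_slope' Set.self_notMem_Ioi).1 h_deriv
  refine (h_slope.comp (tendsto_add_left_nhdsGT_zero a)).congr fun h => ?_
  simp [slope]

/-- The functional equation of a one-parameter semigroup in multiplicative notation. The value at
`0` is not normalised to be `1`; see `SemigroupLaw.zero_eq_one`. -/
def SemigroupLaw {M : Type*} [Mul M] (S : ℝ → M) : Prop :=
  ∀ s t, 0 ≤ s → 0 ≤ t → S (s + t) = S s * S t

namespace SemigroupLaw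

section TopologicalMonoid

variable {M : Type*} [MulOneClass M] [TopologicalSpace M] [ContinuousMul M] {S : ℝ → M}

theorem zero_eq_one [T2Space M] (hlaw : SemigroupLaw S) (hS : Tendsto S (𝓝[>] 0) (𝓝 1)) :
    S 0 = 1 := by
  have h_absorb : ∀ᶠ h in 𝓝[>] 0, S 0 * S h = S h := by
    filter_upwards [self_mem_nhdsWithin] with h hh
    rw [← hlaw 0 h le_rfl (le_of_lt hh), zero_add]
  simpa using tendsto_nhds_unique ((hS.const_mul (S 0)).congr' h_absorb) hS

theorem tendsto_nhdsGT (hlaw : SemigroupLaw S) (hS : Tendsto S (𝓝[>] 0) (𝓝 1)) {t : ℝ}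
    (ht : 0 ≤ t) : Tendsto S (𝓝[>] t) (𝓝 (S t)) := by
  have h_lim : Tendsto (fun u => S t * S (u - t)) (𝓝[>] t) (𝓝 (S t)) := by
    simpa using (hS.comp (tendsto_sub_right_nhdsGT_zero t)).const_mul (S t)
  refine h_lim.congr' ?_
  filter_upwards [self_mem_nhdsWithin] with u hu
  rw [← hlaw t (u - t) ht (sub_nonneg.2 (le_of_lt hu)), add_sub_cancel]

end TopologicalMonoid

section BanachAlgebra

variable {R : Type*} [NormedRing R] [CompleteSpace R] {S : ℝ → R}

-- `S u = S t * (S (t - u))⁻¹` for `u` just below `t`, so no local bound on `S` is needed.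
theorem tendsto_nhdsLT (hlaw : SemigroupLaw S) (hS : Tendsto S (𝓝[>] 0) (𝓝 1)) {t : ℝ}
    (ht : 0 < t) : Tendsto S (𝓝[<] t) (𝓝 (S t)) := by
  have h_one : Tendsto (fun u => S (t - u)) (𝓝[<] t) (𝓝 1) :=
    hS.comp (tendsto_sub_left_nhdsLT_zero t)
  have h_unit : ∀ᶠ u in 𝓝[<] t, IsUnit (S (t - u)) :=
    h_one.eventually (Units.isOpen.mem_nhds isUnit_one)
  have h_lim : Tendsto (fun u => S t * Ring.inverse (S (t - u))) (𝓝[<] t) (𝓝 (S t)) := by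
    simpa using ((NormedRing.inverse_continuousAt (1 : Rˣ)).tendsto.comp h_one).const_mul (S t)
  refine h_lim.congr' ?_
  filter_upwards [h_unit, Ioo_mem_nhdsLT ht] with u hu hut
  have h_split : S t = S u * S (t - u) := by
    rw [← hlaw u (t - u) hut.1.le (sub_nonneg.2 hut.2.le), add_sub_cancel]
  rw [h_split, Ring.mul_inverse_cancel_right _ _ hu]

theorem continuousOn_Ici (hlaw : SemigroupLaw S) (hS : Tendsto S (𝓝[>] 0) (𝓝 1)) :
    ContinuousOn S (Set.Ici 0) := by
  intro t ht
  rcases (Set.mem_Ici.1 ht).eq_or_lt with rfl | ht_pos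
  · exact continuousWithinAt_Ioi_iff_Ici.1 (hlaw.tendsto_nhdsGT hS le_rfl)
  · exact (continuousAt_iff_continuous_left'_right'.2
      ⟨hlaw.tendsto_nhdsLT hS ht_pos, hlaw.tendsto_nhdsGT hS ht⟩).continuousWithinAt

theorem intervalIntegrable (hlaw : SemigroupLaw S) (hS : Tendsto S (𝓝[>] 0) (𝓝 1)) {a b : ℝ}
    (ha : 0 ≤ a) (hb : 0 ≤ b) : IntervalIntegrable S MeasureTheory.volume a b :=
  ((hlaw.continuousOn_Ici hS).mono fun _ hs => (le_inf ha hb).trans hs.1).intervalIntegrable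

variable [NormedAlgebra ℝ R]

theorem mul_integral (hlaw : SemigroupLaw S) {h t : ℝ} (hh : 0 ≤ h) (ht : 0 ≤ t)
    (hint : IntervalIntegrable S MeasureTheory.volume 0 t) :
    S h * ∫ s in 0..t, S s = ∫ s in h..h + t, S s :=
  calc S h * ∫ s in 0..t, S s
      = ∫ s in 0..t, S h * S s :=
        ((ContinuousLinearMap.mul ℝ R (S h)).intervalIntegral_comp_comm hint).symm
    _ = ∫ s in 0..t, S (h + s) := by
        refine intervalIntegral.integral_congr fun s hs => ?_
        rw [Set.uIcc_of_le ht] at hs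
        exact (hlaw h s hh hs.1).symm
    _ = ∫ s in h..h + t, S s := by
        rw [intervalIntegral.integral_comp_add_left, add_zero]

theorem sub_one_mul_integral (hlaw : SemigroupLaw S) (hS : Tendsto S (𝓝[>] 0) (𝓝 1)) {h t : ℝ}
    (hh : 0 ≤ h) (ht : 0 ≤ t) :
    (S h - 1) * ∫ s in 0..t, S s = (∫ s in t..t + h, S s) - ∫ s in 0..h, S s := by
  have h_int {a b : ℝ} (ha : 0 ≤ a) (hb : 0 ≤ b) := hlaw.intervalIntegrable hS ha hb
  rw [sub_mul, one_mul, hlaw.mul_integral hh ht (h_int le_rfl ht), add_comm h t,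
    intervalIntegral.integral_interval_sub_interval_comm' (h_int hh (add_nonneg ht hh))
      (h_int le_rfl ht) (h_int hh le_rfl)]

theorem exists_isUnit_integral (hlaw : SemigroupLaw S) (hS : Tendsto S (𝓝[>] 0) (𝓝 1)) :
    ∃ t > 0, IsUnit (∫ s in 0..t, S s) := by
  have h_avg : Tendsto (fun t : ℝ => t⁻¹ • ∫ s in 0..t, S s) (𝓝[>] 0) (𝓝 1) := by
    simpa only [hlaw.zero_eq_one hS, zero_add] using
      tendsto_inv_smul_integral_nhdsGT (hlaw.continuousOn_Ici hS)
  obtain ⟨t, h_unit, ht⟩ :=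
    ((h_avg.eventually (Units.isOpen.mem_nhds isUnit_one)).and self_mem_nhdsWithin).exists
  exact ⟨t, ht, (isUnit_smul_iff (Units.mk0 t⁻¹ (inv_ne_zero (ne_of_gt ht))) _).1 h_unit⟩

theorem exists_tendsto_inv_smul_sub_one (hlaw : SemigroupLaw S) (hS : Tendsto S (𝓝[>] 0) (𝓝 1)) :
    ∃ a, Tendsto (fun h : ℝ => h⁻¹ • (S h - 1)) (𝓝[>] 0) (𝓝 a) := by
  obtain ⟨t, ht, V, hV⟩ := hlaw.exists_isUnit_integral hS
  have h_cont := hlaw.continuousOn_Ici hS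
  have h_avg_t := tendsto_inv_smul_integral_nhdsGT (h_cont.mono (Set.Ici_subset_Ici.2 ht.le))
  have h_avg_zero := tendsto_inv_smul_integral_nhdsGT h_cont
  refine ⟨(S t - S 0) * ↑V⁻¹, ((h_avg_t.sub h_avg_zero).mul_const _).congr' ?_⟩
  filter_upwards [self_mem_nhdsWithin] with h hh
  rw [zero_add, ← smul_sub, ← hlaw.sub_one_mul_integral hS (le_of_lt hh) ht.le, ← hV,
    smul_mul_assoc, Units.mul_inv_cancel_right]

end BanachAlgebra

end SemigroupLaw

theorem exists_hasGen_of_tendsto_norm_sub_one {E : Type*} [NormedAddCommGroup E]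
    [NormedSpace ℝ E] [CompleteSpace E] {T : ℝ → E →L[ℝ] E}
    (hTadd : ∀ s t, 0 ≤ s → 0 ≤ t → T (s + t) = (T s).comp (T t))
    (hT : Tendsto (fun t => ‖T t - 1‖) (𝓝[>] 0) (𝓝 0)) (f : E) : ∃ g, HasGen T f g := by
  obtain ⟨A, hA⟩ := SemigroupLaw.exists_tendsto_inv_smul_sub_one hTadd
    (tendsto_iff_norm_sub_tendsto_zero.2 hT)
  exact ⟨A f, ((ContinuousLinearMap.apply ℝ E f).continuous.tendsto A).comp hA⟩

theorem domain_full_iff_uniformly_continuous_general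
    {E : Type*} [NormedAddCommGroup E] [NormedSpace ℝ E] [CompleteSpace E]
    {T : ℝ → E →L[ℝ] E}
    (hTadd : ∀ s t : ℝ, 0 ≤ s → 0 ≤ t → T (s + t) = (T s).comp (T t)) :
    ({f : E | ∃ g, HasGen T f g} = Set.univ) ↔
      Tendsto (fun t : ℝ => ‖T t - 1‖) (𝓝[>] (0 : ℝ)) (𝓝 0) := by
  rw [Set.eq_univ_iff_forall]
  exact ⟨tendsto_norm_sub_one_of_forall_exists_hasGen, exists_hasGen_of_tendsto_norm_sub_one hTadd⟩

theorem domain_full_iff_uniformly_continuous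
    (E : Type*) [NormedAddCommGroup E] [NormedSpace ℝ E] [CompleteSpace E]
    (T : ℝ → E →L[ℝ] E)
    (hT0 : T 0 = 1)
    (hTadd : ∀ s t : ℝ, 0 ≤ s → 0 ≤ t → T (s + t) = (T s).comp (T t))
    (hTcont : ∀ f : E,
      Tendsto (fun t : ℝ => ‖T t f - f‖) (𝓝[>] (0 : ℝ)) (𝓝 0)) :
    ({f : E | ∃ g, HasGen T f g} = Set.univ) ↔
      Tendsto (fun t : ℝ => ‖T t - 1‖) (𝓝[>] (0 : ℝ)) (𝓝 0) :=
  domain_full_iff_uniformly_continuous_general hTadd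
end

section
/- For every finite set F of real numbers, every ε > 0, and every natural number N, there exists a natural number k with k ≥ N such that |sin(k·t)| < ε for all t ∈ F. -/
/-!
In a compact topological group the identity is a cluster point of the powers of every element.
Applied to a product of groups this makes finitely many elements return near the identity
simultaneously, and applied to copies of `ℝ / 2πℤ` it makes the multiples `k * t` of finitely many
reals `t` simultaneously close to `0` modulo `2π`, where the sine vanishes.
-/

open Filter Function
open scoped Topology

@[to_additive]
theorem frequently_forall_pow_mem_of_mem_nhds_one {ι : Type*} {G : ι → Type*} [∀ i, Group (G i)]
    [∀ i, TopologicalSpace (G i)] [∀ i, IsTopologicalGroup (G i)] [∀ i, CompactSpace (G i)]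
    {s : Set ι} (hs : s.Finite) (x : ∀ i, G i) {U : ∀ i, Set (G i)} (hU : ∀ i ∈ s, U i ∈ 𝓝 1) :
    ∃ᶠ n : ℕ in atTop, ∀ i ∈ s, x i ^ n ∈ U i :=
  (mapClusterPt_one_atTop_pow x).frequently (set_pi_mem_nhds hs hU)

theorem periodic_abs {α β : Type*} [AddGroup α] [LinearOrder α] {f : α → β} {c : α}
    (hf : Periodic f c) : Periodic f |c| := by
  rcases abs_choice c with h | h <;> rw [h]
  exacts [hf, hf.neg]

theorem frequently_forall_apply_nsmul_mem_of_periodic {X : Type*} [TopologicalSpace X]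
    {f : ℝ → X} {T : ℝ} (hf : Periodic f T) (hT : T ≠ 0) (hf₀ : ContinuousAt f 0)
    {s : Set ℝ} (hs : s.Finite) {U : Set X} (hU : U ∈ 𝓝 (f 0)) :
    ∃ᶠ n : ℕ in atTop, ∀ t ∈ s, f (n • t) ∈ U := by
  have : Fact (0 < |T|) := ⟨abs_pos.2 hT⟩
  have hlift : (periodic_abs hf).lift ⁻¹' U ∈ 𝓝 (0 : AddCircle |T|) := by
    rw [← QuotientAddGroup.mk_zero, QuotientAddGroup.nhds_eq]
    exact hf₀ hU
  exact frequently_forall_nsmul_mem_of_mem_nhds_zero hs (fun t : ℝ ↦ (t : AddCircle |T|))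
    fun _ _ ↦ hlift

theorem sin_simultaneously_small_on_finset
    (F : Finset ℝ) (ε : ℝ) (hε : 0 < ε) (N : ℕ) :
    ∃ k : ℕ, N ≤ k ∧ ∀ t ∈ F, |Real.sin (k * t)| < ε := by
  have hball : Metric.ball 0 ε ∈ 𝓝 (Real.sin 0) := by
    simpa using Metric.ball_mem_nhds (0 : ℝ) hε
  have hfreq : ∃ᶠ k : ℕ in atTop, ∀ t ∈ F, Real.sin (k • t) ∈ Metric.ball 0 ε :=
    frequently_forall_apply_nsmul_mem_of_periodic Real.sin_periodic Real.two_pi_pos.ne'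
      Real.continuous_sin.continuousAt F.finite_toSet hball
  simpa using frequently_atTop.1 hfreq N
end

section
/- Let U be a countably incomplete ultrafilter on a set I and let E be any normed real vector space (not necessarily complete). Then the quotient space ℓ∞(I,E)/c_U, equipped with the quotient norm ‖F + c_U‖ = inf{‖F − G‖ : G ∈ c_U}, is complete, i.e. a Banach space. -/
open scoped ENNReal
noncomputable def cU (I : Type*) (E : Type*) [NormedAddCommGroup E] [NormedSpace ℝ E]
    (U : Filter I) : Submodule ℝ (lp (fun _ : I => E) ∞) where
  carrier := {F : lp (fun _ : I => E) ∞ | ∀ ε : ℝ, 0 < ε → {i : I | ‖F i‖ < ε} ∈ U}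
  zero_mem' := by
    intro ε hε
    refine Filter.mem_of_superset Filter.univ_mem ?_
    intro i _
    simp [hε]
  add_mem' := by
    intro a b ha hb ε hε
    refine Filter.mem_of_superset
      (Filter.inter_mem (ha (ε / 2) (by positivity)) (hb (ε / 2) (by positivity))) ?_
    rintro i ⟨h1, h2⟩
    have : (a + b) i = a i + b i := by
      rw [lp.coeFn_add]; rfl
    simp only [Set.mem_setOf_eq] at h1 h2 ⊢
    rw [this]
    calc ‖a i + b i‖ ≤ ‖a i‖ + ‖b i‖ := norm_add_le _ _
      _ < ε := by linarith
  smul_mem' := by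
    intro c x hx ε hε
    refine Filter.mem_of_superset (hx (ε / (|c| + 1)) (by positivity)) ?_
    intro i hi
    simp only [Set.mem_setOf_eq] at hi ⊢
    have : (c • x) i = c • x i := by
      rw [lp.coeFn_smul]; rfl
    rw [this, norm_smul]
    have h1 : ‖c‖ = |c| := Real.norm_eq_abs c
    have h2 : (0:ℝ) ≤ |c| := abs_nonneg c
    have h3 : ‖x i‖ ≥ 0 := norm_nonneg _
    rw [h1]
    calc |c| * ‖x i‖ ≤ (|c| + 1) * ‖x i‖ := by nlinarith
      _ < (|c| + 1) * (ε / (|c| + 1)) := by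
          exact mul_lt_mul_of_pos_left hi (by positivity)
      _ = ε := by field_simp

/-
A countably incomplete ultrafilter admits `g : I → ℕ` tending to `∞` along it, and a diagonal
argument then replaces completeness of `E`. If the classes of `F k` form a rapidly Cauchy
sequence, then for each `n` the property `∀ k ≤ n, ‖F k i - F n i‖ < b k` holds for almost all `i`.
Let `N i` be the largest `n ≤ g i` for which it holds at `i`; then `N → ∞` along the filter, and the
class of `i ↦ F (N i) i`, truncated to a bounded family, is the limit. No limit is taken in `E`.
-/

open Filter Topology

section Diagonal

variable {I : Type*} {l : Filter I}

theorem exists_tendsto_atTop_of_compl_iInter_mem {A : ℕ → Set I} (hA : ∀ n, A n ∈ l)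
    (hA_compl : (⋂ n, A n)ᶜ ∈ l) : ∃ g : I → ℕ, Tendsto g l atTop := by
  refine ⟨fun i => sInf {n | i ∉ A n}, tendsto_atTop.2 fun n => ?_⟩
  have mem_before : ∀ᶠ i in l, ∀ k < n, i ∈ A k :=
    (eventually_all_finite (Set.finite_Iio n)).2 fun k _ => hA k
  filter_upwards [mem_before, hA_compl] with i hi hi_compl
  have exists_notMem : ∃ m, i ∉ A m := by simpa using hi_compl
  exact le_csInf exists_notMem fun m hm => not_lt.1 fun hmn => hm (hi m hmn)

theorem exists_tendsto_atTop_eventually {g : I → ℕ} (hg : Tendsto g l atTop)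
    {p : ℕ → I → Prop} (hp : ∀ n, ∀ᶠ i in l, p n i) :
    ∃ N : I → ℕ, Tendsto N l atTop ∧ ∀ᶠ i in l, p (N i) i := by
  classical
  refine ⟨fun i => Nat.findGreatest (p · i) (g i), tendsto_atTop.2 fun n => ?_, ?_⟩
  · filter_upwards [hg.eventually_ge_atTop n, hp n] with i hgi hpi
    exact Nat.le_findGreatest hgi hpi
  · filter_upwards [hp 0] with i hpi
    exact Nat.findGreatest_spec (P := (p · i)) (Nat.zero_le _) hpi

end Diagonal

section BoundedFamilies

variable {I : Type*} {l : Filter I} {E : I → Type*} [∀ i, NormedAddCommGroup (E i)]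

theorem exists_lp_norm_le_eventually_eq {f : ∀ i, E i} {c : ℝ} (hc : 0 ≤ c)
    (hf : ∀ᶠ i in l, ‖f i‖ ≤ c) : ∃ G : lp E ∞, ‖G‖ ≤ c ∧ ∀ᶠ i in l, G i = f i := by
  classical
  let truncation : ∀ i, E i := fun i => if ‖f i‖ ≤ c then f i else 0
  have truncation_le : ∀ i, ‖truncation i‖ ≤ c := fun i => by
    by_cases hi : ‖f i‖ ≤ c <;> simp [truncation, hi, hc]
  refine ⟨⟨truncation, memℓp_infty ⟨c, Set.forall_mem_range.2 truncation_le⟩⟩,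
    lp.norm_le_of_forall_le hc truncation_le, ?_⟩
  filter_upwards [hf] with i hi
  exact if_pos hi

theorem exists_lp_forall_eventually_norm_sub_lt {g : I → ℕ} (hg : Tendsto g l atTop)
    {F : ℕ → lp E ∞} {b : ℕ → ℝ}
    (hF : ∀ k n, k ≤ n → ∀ᶠ i in l, ‖F k i - F n i‖ < b k) :
    ∃ G : lp E ∞, ∀ k, ∀ᶠ i in l, ‖F k i - G i‖ < b k := by
  have close : ∀ n, ∀ᶠ i in l, ∀ k ≤ n, ‖F k i - F n i‖ < b k := fun n =>
    (eventually_all_finite (Set.finite_Iic n)).2 fun k hk => hF k n hk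
  obtain ⟨N, hN, close_diagonal⟩ := exists_tendsto_atTop_eventually hg close
  have diagonal_le : ∀ᶠ i in l, ‖F (N i) i‖ ≤ ‖F 0‖ + |b 0| := by
    filter_upwards [close_diagonal] with i hi
    calc ‖F (N i) i‖ ≤ ‖F 0 i‖ + ‖F 0 i - F (N i) i‖ := norm_le_norm_add_norm_sub _ _
      _ ≤ ‖F 0‖ + |b 0| := add_le_add (lp.norm_apply_le_norm ENNReal.top_ne_zero _ _)
          ((hi 0 (Nat.zero_le _)).le.trans (le_abs_self _))
  obtain ⟨G, -, hG⟩ := exists_lp_norm_le_eventually_eq (by positivity) diagonal_le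
  refine ⟨G, fun k => ?_⟩
  filter_upwards [hG, close_diagonal, hN.eventually_ge_atTop k] with i hGi hi hki
  rw [hGi]
  exact hi k hki

end BoundedFamilies

section Quotient

variable {I E : Type*} [NormedAddCommGroup E] [NormedSpace ℝ E] {l : Filter I}
  {F : lp (fun _ : I => E) ∞} {c : ℝ}

theorem norm_mkQ_cU_le_of_eventually_le (hc : 0 ≤ c) (hF : ∀ᶠ i in l, ‖F i‖ ≤ c) :
    ‖(cU I E l).mkQ F‖ ≤ c := by
  obtain ⟨G, hG_le, hG_eq⟩ := exists_lp_norm_le_eventually_eq hc hF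
  have sub_mem : F - G ∈ cU I E l := fun ε hε => by
    filter_upwards [hG_eq] with i hi
    simpa [hi] using hε
  calc ‖(cU I E l).mkQ F‖ = ‖(cU I E l).mkQ G‖ :=
        congrArg norm ((Submodule.Quotient.eq _).2 sub_mem)
    _ ≤ ‖G‖ := Submodule.Quotient.norm_mk_le _ G
    _ ≤ c := hG_le

theorem eventually_norm_lt_of_norm_mkQ_cU_lt (hF : ‖(cU I E l).mkQ F‖ < c) :
    ∀ᶠ i in l, ‖F i‖ < c := by
  obtain ⟨G, hG_mk, hG_lt⟩ := Submodule.Quotient.norm_mk_lt ((cU I E l).mkQ F) (sub_pos.2 hF)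
  rw [add_sub_cancel] at hG_lt
  have sub_mem : F - G ∈ cU I E l := (Submodule.Quotient.eq _).1 hG_mk.symm
  filter_upwards [sub_mem (c - ‖G‖) (sub_pos.2 hG_lt)] with i (hi : ‖F i - G i‖ < c - ‖G‖)
  calc ‖F i‖ ≤ ‖G i‖ + ‖F i - G i‖ := norm_le_norm_add_norm_sub' _ _
    _ < ‖G‖ + (c - ‖G‖) :=
        add_lt_add_of_le_of_lt (lp.norm_apply_le_norm ENNReal.top_ne_zero _ _) hi
    _ = c := add_sub_cancel _ _

theorem quotient_complete_general (hl : ∃ g : I → ℕ, Tendsto g l atTop) :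
    CompleteSpace ((lp (fun _ : I => E) ∞) ⧸ cU I E l) := by
  obtain ⟨g, hg⟩ := hl
  let b : ℕ → ℝ := fun n => (1 / 2) ^ n
  have b_pos : ∀ n, 0 < b n := fun n => by positivity
  have b_tendsto : Tendsto b atTop (𝓝 0) :=
    tendsto_pow_atTop_nhds_zero_of_lt_one (by norm_num) (by norm_num)
  refine Metric.complete_of_convergent_controlled_sequences b b_pos fun u hu => ?_
  choose F hF using fun n => (cU I E l).mkQ_surjective (u n)
  have F_close : ∀ k n, k ≤ n → ∀ᶠ i in l, ‖F k i - F n i‖ < b k := fun k n hkn => by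
    refine eventually_norm_lt_of_norm_mkQ_cU_lt (F := F k - F n) ?_
    rw [map_sub, hF, hF, ← dist_eq_norm]
    exact hu k k n le_rfl hkn
  obtain ⟨G, hG⟩ := exists_lp_forall_eventually_norm_sub_lt hg F_close
  refine ⟨(cU I E l).mkQ G, tendsto_iff_dist_tendsto_zero.2 <|
    squeeze_zero (fun _ => dist_nonneg) (fun k => ?_) b_tendsto⟩
  rw [dist_eq_norm, ← hF, ← map_sub]
  exact norm_mkQ_cU_le_of_eventually_le (b_pos k).le ((hG k).mono fun _ hi => hi.le)

end Quotient

theorem quotient_complete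
    (I : Type*) (E : Type*) [NormedAddCommGroup E] [NormedSpace ℝ E]
    (U : Ultrafilter I)
    (hU : ∃ A : ℕ → Set I, (∀ n, A n ∈ U) ∧ (⋂ n, A n) ∉ U) :
    CompleteSpace ((lp (fun _ : I => E) ∞) ⧸ cU I E (U : Filter I)) := by
  obtain ⟨A, hA, hA_inter⟩ := hU
  exact quotient_complete_general <|
    exists_tendsto_atTop_of_compl_iInter_mem hA (Ultrafilter.compl_mem_iff_notMem.2 hA_inter)
end

section
/- Let E be a real Banach space, T a strongly continuous semigroup on E, I an infinite set, and define the semigroup T̃ on ℓ∞(I,E) by (T̃(t)F)(i) = T(t)(F(i)). Then T̃ is strongly continuous on ℓ∞(I,E) (i.e. sup_{i∈I} ‖T(t)F(i) − F(i)‖ → 0 as t → 0⁺ for every F ∈ ℓ∞(I,E)) if and only if T is uniformly continuous on E (i.e. the operator norm ‖T(t) − id‖ → 0 as t → 0⁺). -/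
open Filter Topology
open scoped ENNReal

/-!
A family of operators indexed by a set that embeds into `I` is tested by a single element of
`ℓ∞(I, E)`: choose for each operator a vector of the unit ball attaining its norm up to a fixed
factor, and place these vectors at distinct indices. Hence strong convergence of the lifts of a
sequence of operators already forces norm convergence. Sequences suffice because `𝓝[>] 0` is
countably generated.
-/

-- The norm of `𝕜` may take discrete values, so vectors can only be rescaled into the shell
-- `1 / ‖c‖ ≤ ‖x‖ < 1`; this costs the factor `‖c‖`.
theorem exists_norm_le_one_opNorm_le {𝕜 𝕜₂ E F : Type*} [NontriviallyNormedField 𝕜]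
    [NontriviallyNormedField 𝕜₂] {σ : 𝕜 →+* 𝕜₂} [RingHomIsometric σ]
    [SeminormedAddCommGroup E] [NormedSpace 𝕜 E] [SeminormedAddCommGroup F] [NormedSpace 𝕜₂ F]
    {c : 𝕜} (hc : 1 < ‖c‖) (A : E →SL[σ] F) :
    ∃ x : E, ‖x‖ ≤ 1 ∧ ‖A‖ ≤ 2 * ‖c‖ * ‖A x‖ := by
  by_contra! hlt
  have hA : 0 < ‖A‖ := by simpa using hlt 0 (by simp)
  have hshell (x : E) (hx : 1 / ‖c‖ ≤ ‖x‖) (hx1 : ‖x‖ < 1) : ‖A x‖ ≤ ‖A‖ / 2 * ‖x‖ := by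
    calc ‖A x‖ ≤ ‖A‖ / (2 * ‖c‖) := by
          rw [le_div_iff₀' (by positivity)]
          exact (hlt x hx1.le).le
      _ = ‖A‖ / 2 * (1 / ‖c‖) := by ring
      _ ≤ ‖A‖ / 2 * ‖x‖ := by gcongr
  have hhalf : ‖A‖ ≤ ‖A‖ / 2 := A.opNorm_le_of_shell one_pos (by positivity) hc hshell
  exact hhalf.not_gt (half_lt_self hA)

theorem exists_lp_infty_comp_eq {ι I E : Type*} [NormedAddCommGroup E] (e : ι ↪ I) {x : ι → E}
    (hx : Memℓp x ∞) : ∃ f : lp (fun _ : I => E) ∞, f ∘ e = x := by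
  have hsubset : (Set.range fun i => ‖Function.extend e x 0 i‖) ⊆
      (Set.range fun n => ‖x n‖) ∪ {0} := by
    rintro _ ⟨i, rfl⟩
    by_cases hi : ∃ n, e n = i
    · obtain ⟨n, rfl⟩ := hi
      exact .inl ⟨n, by simp only [e.injective.extend_apply]⟩
    · exact .inr (by simp [Function.extend_apply' _ _ _ hi])
  have hmem : Memℓp (Function.extend e x 0) ∞ :=
    memℓp_infty ((hx.bddAbove.union bddAbove_singleton).mono hsubset)
  exact ⟨⟨_, hmem⟩, Function.extend_comp e.injective x 0⟩

section Lift

variable {𝕜 E F : Type*} [NontriviallyNormedField 𝕜] [NormedAddCommGroup E] [NormedSpace 𝕜 E]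
  [NormedAddCommGroup F] [NormedSpace 𝕜 F] (I : Type*)

/-- The lift `Ã : ℓ∞(I, E) → ℓ∞(I, F)`, `(Ã f)(i) = A (f i)`, of a bounded operator `A : E → F`;
applied to each operator of a semigroup `T`, it gives the lifted semigroup `T̃`. -/
noncomputable def lpInftyLift (A : E →L[𝕜] F) :
    lp (fun _ : I => E) ∞ →L[𝕜] lp (fun _ : I => F) ∞ :=
  lp.mapCLM ∞ (fun _ => A) (norm_nonneg A) fun _ => le_rfl

variable {I}

@[simp]
theorem lpInftyLift_apply (A : E →L[𝕜] F) (f : lp (fun _ : I => E) ∞) (i : I) :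
    lpInftyLift I A f i = A (f i) :=
  rfl

theorem lpInftyLift_sub (A B : E →L[𝕜] F) :
    lpInftyLift I (A - B) = lpInftyLift I A - lpInftyLift I B := by
  ext f i
  simp

theorem norm_lpInftyLift_le (A : E →L[𝕜] F) : ‖lpInftyLift I A‖ ≤ ‖A‖ :=
  lp.norm_mapCLM_le ∞ _ (norm_nonneg A) _

theorem norm_apply_le_norm_lpInftyLift (A : E →L[𝕜] F) (f : lp (fun _ : I => E) ∞) (i : I) :
    ‖A (f i)‖ ≤ ‖lpInftyLift I A f‖ :=
  lp.norm_apply_le_norm ENNReal.top_ne_zero (lpInftyLift I A f) i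

theorem continuous_lpInftyLift_apply (f : lp (fun _ : I => E) ∞) :
    Continuous fun A : E →L[𝕜] F => lpInftyLift I A f := by
  refine (LipschitzWith.of_dist_le_mul (K := ‖f‖₊) fun A B => ?_).continuous
  calc dist (lpInftyLift I A f) (lpInftyLift I B f)
      = ‖lpInftyLift I (A - B) f‖ := by
        rw [dist_eq_norm, lpInftyLift_sub, sub_apply]
    _ ≤ ‖A - B‖ * ‖f‖ := ContinuousLinearMap.le_of_opNorm_le _ (norm_lpInftyLift_le _) f
    _ = ‖f‖₊ * dist A B := by rw [dist_eq_norm, coe_nnnorm, mul_comm]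

theorem exists_opNorm_le_mul_norm_lpInftyLift {ι : Type*} (e : ι ↪ I) (A : ι → E →L[𝕜] F) :
    ∃ (C : ℝ) (f : lp (fun _ : I => E) ∞), ∀ n, ‖A n‖ ≤ C * ‖lpInftyLift I (A n) f‖ := by
  obtain ⟨c, hc⟩ := NormedField.exists_one_lt_norm 𝕜
  choose x hx_ball hx_norming using fun n => exists_norm_le_one_opNorm_le hc (A n)
  have hx : Memℓp x ∞ := memℓp_infty ⟨1, Set.forall_mem_range.2 hx_ball⟩
  obtain ⟨f, rfl⟩ := exists_lp_infty_comp_eq e hx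
  refine ⟨2 * ‖c‖, f, fun n => (hx_norming n).trans ?_⟩
  gcongr
  exact norm_apply_le_norm_lpInftyLift (A n) f (e n)

theorem tendsto_of_tendsto_lpInftyLift {ι : Type*} (e : ι ↪ I) {l : Filter ι}
    {A : ι → E →L[𝕜] F} {B : E →L[𝕜] F}
    (h : ∀ f, Tendsto (fun n => lpInftyLift I (A n) f) l (𝓝 (lpInftyLift I B f))) :
    Tendsto A l (𝓝 B) := by
  obtain ⟨C, f, hf⟩ := exists_opNorm_le_mul_norm_lpInftyLift e fun n => A n - B
  rw [tendsto_iff_norm_sub_tendsto_zero]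
  refine squeeze_zero (fun _ => norm_nonneg _) hf ?_
  simpa only [lpInftyLift_sub, sub_apply, mul_zero] using
    (tendsto_iff_norm_sub_tendsto_zero.1 (h f)).const_mul C

variable (I)

theorem lifted_semigroup_strongly_continuous_iff_uniformly_continuous_general [Infinite I]
    {α : Type*} {l : Filter α} [l.IsCountablyGenerated] {A : α → E →L[𝕜] F} {B : E →L[𝕜] F} :
    (∀ f, Tendsto (fun t => lpInftyLift I (A t) f) l (𝓝 (lpInftyLift I B f))) ↔
      Tendsto A l (𝓝 B) :=
  ⟨fun h => tendsto_of_seq_tendsto fun _ hu =>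
      tendsto_of_tendsto_lpInftyLift (Infinite.natEmbedding I) fun f => (h f).comp hu,
    fun h f => ((continuous_lpInftyLift_apply f).tendsto B).comp h⟩

end Lift

theorem lifted_semigroup_strongly_continuous_iff_uniformly_continuous
    (E : Type*) [NormedAddCommGroup E] [NormedSpace ℝ E] [CompleteSpace E]
    (T : ℝ → E →L[ℝ] E)
    (hT0 : T 0 = 1)
    (hTadd : ∀ s t : ℝ, 0 ≤ s → 0 ≤ t → T (s + t) = (T s).comp (T t))
    (hTcont : ∀ f : E,
      Tendsto (fun t : ℝ => ‖T t f - f‖) (𝓝[>] (0 : ℝ)) (𝓝 0))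
    (I : Type*) [Infinite I] :
    (∀ F : lp (fun _ : I => E) ∞,
        Tendsto (fun t : ℝ => ⨆ i : I, ‖T t (F i) - F i‖) (𝓝[>] (0 : ℝ)) (𝓝 0)) ↔
      Tendsto (fun t : ℝ => ‖T t - 1‖) (𝓝[>] (0 : ℝ)) (𝓝 0) := by
  have norm_lift_sub (t : ℝ) (F : lp (fun _ : I => E) ∞) :
      ‖lpInftyLift I (T t) F - lpInftyLift I (1 : E →L[ℝ] E) F‖ = ⨆ i : I, ‖T t (F i) - F i‖ :=
    rfl
  simp_rw [← norm_lift_sub, ← tendsto_iff_norm_sub_tendsto_zero]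
  exact lifted_semigroup_strongly_continuous_iff_uniformly_continuous_general I
end

section
/- Let E be a real Banach space, T a strongly continuous semigroup on E, I a set, U a filter on I, and let m^T := {F ∈ ℓ∞(I,E) : sup_{i∈I} ‖T(t)F(i) − F(i)‖ → 0 as t → 0⁺}. Then for every F ∈ m^T, the distance from F to c_U ∩ m^T equals the distance from F to c_U: inf{‖F − G‖ : G ∈ c_U ∩ m^T} = inf{‖F − G‖ : G ∈ c_U}. (Hence the canonical map m^T/(c_U ∩ m^T) → ℓ∞(I,E)/c_U is a well-defined injective isometry.) -/
open Filter Topology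
open scoped ENNReal

/-!
If `G ∈ c_U` lies at distance `c` from `F`, replace it by the soft thresholding `H` of `F` at
level `c`, which shortens each vector `F i` by `c` along its own direction, or sends it to `0` when
`‖F i‖ ≤ c`. Then `‖F - H‖ ≤ c`, and `‖H i‖ ≤ ‖G i‖` for every `i`, so `H ∈ c_U`. Finally `H i` is a
multiple of `F i` by a factor in `[0, 1]`, so by linearity `‖T t (H i) - H i‖ ≤ ‖T t (F i) - F i‖`,
and `H` inherits from `F` membership in `m^T`.
-/

open scoped NNReal

theorem infDist_eq_infDist_of_subset {X : Type*} [PseudoMetricSpace X] {s t : Set X} {x : X}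
    (hst : s ⊆ t) (hts : ∀ y ∈ t, ∃ z ∈ s, dist x z ≤ dist x y) :
    Metric.infDist x s = Metric.infDist x t := by
  rcases t.eq_empty_or_nonempty with rfl | ht
  · rw [Set.subset_empty_iff.mp hst]
  have hs : s.Nonempty := by
    obtain ⟨y, hy⟩ := ht
    obtain ⟨z, hz, -⟩ := hts y hy
    exact ⟨z, hz⟩
  refine le_antisymm ((Metric.le_infDist ht).mpr fun y hy => ?_)
    (Metric.infDist_le_infDist_of_subset hst hs)
  obtain ⟨z, hz, hzy⟩ := hts y hy
  exact (Metric.infDist_le_dist_of_mem hz).trans hzy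

section SoftThreshold

variable {E : Type*} [SeminormedAddCommGroup E]

/-- The factor by which soft thresholding at level `c` multiplies `x`. It equals
`max 0 (1 - c / ‖x‖)` for `x ≠ 0`. -/
noncomputable def shrinkFactor (c : ℝ≥0) (x : E) : ℝ :=
  1 - min ‖x‖ c / ‖x‖

theorem shrinkFactor_mem_Icc (c : ℝ≥0) (x : E) : shrinkFactor c x ∈ Set.Icc (0 : ℝ) 1 :=
  ⟨sub_nonneg.mpr (div_le_one_of_le₀ (min_le_left _ _) (norm_nonneg x)),
    sub_le_self _ (by positivity)⟩

variable [NormedSpace ℝ E]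

/-- Soft thresholding at level `c`: the radial map sending `x` to the vector of norm
`max 0 (‖x‖ - c)` in the direction of `x`. -/
noncomputable def softThreshold (c : ℝ≥0) (x : E) : E :=
  shrinkFactor c x • x

theorem norm_sub_softThreshold (c : ℝ≥0) (x : E) : ‖x - softThreshold c x‖ = min ‖x‖ c := by
  have residual : x - softThreshold c x = (min ‖x‖ c / ‖x‖) • x := by
    rw [softThreshold, shrinkFactor, sub_smul, one_smul, sub_sub_cancel]
  rw [residual, norm_smul, Real.norm_of_nonneg (by positivity)]
  exact div_mul_cancel_of_imp fun hx => by simp [hx]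

theorem norm_softThreshold (c : ℝ≥0) (x : E) : ‖softThreshold c x‖ = ‖x‖ - min ‖x‖ c := by
  rw [softThreshold, norm_smul, Real.norm_of_nonneg (shrinkFactor_mem_Icc c x).1, shrinkFactor,
    sub_mul, one_mul, div_mul_cancel_of_imp fun hx => by simp [hx]]

theorem norm_softThreshold_le (c : ℝ≥0) (x : E) : ‖softThreshold c x‖ ≤ ‖x‖ := by
  rw [norm_softThreshold]
  exact sub_le_self _ (by positivity)

theorem norm_softThreshold_le_norm_of_norm_sub_le {c : ℝ≥0} {x y : E} (h : ‖x - y‖ ≤ c) :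
    ‖softThreshold c x‖ ≤ ‖y‖ := by
  rw [norm_softThreshold, sub_le_iff_le_add, ← sub_le_iff_le_add']
  exact le_min (sub_le_self _ (norm_nonneg y)) ((norm_sub_norm_le x y).trans h)

end SoftThreshold

section BoundedFamilies

variable {I : Type*} {E : I → Type*} [∀ i, NormedAddCommGroup (E i)]

/-- A set of bounded families is solid if it contains every family that is dominated in norm,
index by index, by one of its members. -/
def IsNormSolid (C : Set (lp E ∞)) : Prop :=
  ∀ ⦃G⦄, G ∈ C → ∀ ⦃H : lp E ∞⦄, (∀ i, ‖H i‖ ≤ ‖G i‖) → H ∈ C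

/-- The set `c_U` of bounded families tending to `0` along the filter `U`. -/
def nullAlong (U : Filter I) : Set (lp E ∞) :=
  {G | ∀ ε : ℝ, 0 < ε → {i : I | ‖G i‖ < ε} ∈ U}

theorem isNormSolid_nullAlong (U : Filter I) : IsNormSolid (nullAlong U : Set (lp E ∞)) :=
  fun _ hG _ hHG ε hε => mem_of_superset (hG ε hε) fun i hi => (hHG i).trans_lt hi

variable [∀ i, NormedSpace ℝ (E i)]

/-- A set of bounded families is stable under shrinking if multiplying each entry of one of its
members by its own factor in `[0, 1]` does not leave the set. -/
def IsStableUnderShrinking (M : Set (lp E ∞)) : Prop :=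
  ∀ ⦃F⦄, F ∈ M → ∀ ⦃H : lp E ∞⦄, (∀ i, ∃ r ∈ Set.Icc (0 : ℝ) 1, H i = r • F i) → H ∈ M

/-- Soft thresholding of a bounded family, entry by entry. -/
noncomputable def lpSoftThreshold (c : ℝ≥0) (F : lp E ∞) : lp E ∞ :=
  ⟨fun i => softThreshold c (F i), memℓp_infty <| (lp.memℓp F).bddAbove.range_mono _
    fun i => norm_softThreshold_le c (F i)⟩

theorem dist_lpSoftThreshold_le (c : ℝ≥0) (F : lp E ∞) : dist F (lpSoftThreshold c F) ≤ c := by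
  rw [dist_eq_norm]
  exact lp.norm_le_of_forall_le c.2 fun i =>
    (norm_sub_softThreshold c (F i)).trans_le (min_le_right _ _)

theorem norm_lpSoftThreshold_nndist_apply_le (F G : lp E ∞) (i : I) :
    ‖lpSoftThreshold (nndist F G) F i‖ ≤ ‖G i‖ := by
  refine norm_softThreshold_le_norm_of_norm_sub_le ?_
  rw [coe_nndist, dist_eq_norm]
  exact lp.norm_apply_le_norm ENNReal.top_ne_zero (F - G) i

theorem IsNormSolid.infDist_inter_eq {C M : Set (lp E ∞)} (hC : IsNormSolid C)
    (hM : IsStableUnderShrinking M) {F : lp E ∞} (hF : F ∈ M) :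
    Metric.infDist F (C ∩ M) = Metric.infDist F C := by
  refine infDist_eq_infDist_of_subset Set.inter_subset_left fun G hG =>
    ⟨lpSoftThreshold (nndist F G) F, ⟨?_, ?_⟩, dist_lpSoftThreshold_le _ F⟩
  · exact hC hG (norm_lpSoftThreshold_nndist_apply_le F G)
  · exact hM hF fun i => ⟨_, shrinkFactor_mem_Icc _ (F i), rfl⟩

end BoundedFamilies

section UniformlyNull

variable {I τ E E' : Type*} [NormedAddCommGroup E] [NormedSpace ℝ E]
  [SeminormedAddCommGroup E'] [NormedSpace ℝ E']

/-- The bounded families on which the operators `A t` tend to `0` along `l`, uniformly over the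
index. For `A t = T t - 1` and `t → 0⁺` this is `m^T`. -/
def uniformlyNull (A : τ → E →L[ℝ] E') (l : Filter τ) : Set (lp (fun _ : I => E) ∞) :=
  {F | Tendsto (fun t => ⨆ i, ‖A t (F i)‖) l (𝓝 0)}

theorem uniformlyNull_sub_one (T : τ → E →L[ℝ] E) (l : Filter τ) :
    uniformlyNull (I := I) (fun t => T t - 1) l =
      {F | Tendsto (fun t => ⨆ i, ‖T t (F i) - F i‖) l (𝓝 0)} := by
  simp only [uniformlyNull, sub_apply, one_apply_eq_self]

theorem bddAbove_range_norm_apply (A : E →L[ℝ] E') (F : lp (fun _ : I => E) ∞) :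
    BddAbove (Set.range fun i => ‖A (F i)‖) := by
  refine ⟨‖A‖ * ‖F‖, ?_⟩
  rintro _ ⟨i, rfl⟩
  exact A.le_opNorm_of_le (lp.norm_apply_le_norm ENNReal.top_ne_zero F i)

theorem isStableUnderShrinking_uniformlyNull (A : τ → E →L[ℝ] E') (l : Filter τ) :
    IsStableUnderShrinking (uniformlyNull (I := I) A l) := by
  intro F hF H hH
  have norm_apply_le (t : τ) (i : I) : ‖A t (H i)‖ ≤ ‖A t (F i)‖ := by
    obtain ⟨r, ⟨hr0, hr1⟩, hHi⟩ := hH i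
    rw [hHi, map_smul, norm_smul, Real.norm_of_nonneg hr0]
    exact mul_le_of_le_one_left (norm_nonneg _) hr1
  exact squeeze_zero (fun t => Real.iSup_nonneg fun i => norm_nonneg _)
    (fun t => ciSup_mono (bddAbove_range_norm_apply (A t) F) (norm_apply_le t)) hF

theorem infDist_to_cU_inter_mT_eq_infDist_to_cU_general (A : τ → E →L[ℝ] E') (l : Filter τ)
    (U : Filter I) {F : lp (fun _ : I => E) ∞} (hF : F ∈ uniformlyNull A l) :
    Metric.infDist F (nullAlong U ∩ uniformlyNull A l) = Metric.infDist F (nullAlong U) :=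
  (isNormSolid_nullAlong U).infDist_inter_eq (isStableUnderShrinking_uniformlyNull A l) hF

end UniformlyNull

theorem infDist_to_cU_inter_mT_eq_infDist_to_cU
    (E : Type*) [NormedAddCommGroup E] [NormedSpace ℝ E] [CompleteSpace E]
    (T : ℝ → E →L[ℝ] E)
    (hT0 : T 0 = 1)
    (hTadd : ∀ s t : ℝ, 0 ≤ s → 0 ≤ t → T (s + t) = (T s).comp (T t))
    (hTcont : ∀ f : E,
      Tendsto (fun t : ℝ => ‖T t f - f‖) (𝓝[>] (0 : ℝ)) (𝓝 0))
    (I : Type*) (U : Filter I) :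
    ∀ F ∈ {F : lp (fun _ : I => E) ∞ |
        Tendsto (fun t : ℝ => ⨆ i : I, ‖T t (F i) - F i‖) (𝓝[>] (0 : ℝ)) (𝓝 0)},
      Metric.infDist F
        ({G : lp (fun _ : I => E) ∞ | ∀ ε : ℝ, 0 < ε → {i : I | ‖G i‖ < ε} ∈ U} ∩
          {G : lp (fun _ : I => E) ∞ |
            Tendsto (fun t : ℝ => ⨆ i : I, ‖T t (G i) - G i‖) (𝓝[>] (0 : ℝ)) (𝓝 0)}) =
      Metric.infDist F
        {G : lp (fun _ : I => E) ∞ | ∀ ε : ℝ, 0 < ε → {i : I | ‖G i‖ < ε} ∈ U} := by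
  rw [← uniformlyNull_sub_one T]
  exact fun _ hF => infDist_to_cU_inter_mT_eq_infDist_to_cU_general _ _ U hF
end

section
/- Let E be a real Banach space, T a strongly continuous semigroup on E, I a set, and U a countably incomplete ultrafilter on I. Let F ∈ ℓ∞(I,E) be such that for every family (h_i)_{i∈I} of nonnegative reals with h_i → 0 along U, one has ‖T(h_i)F(i) − F(i)‖ → 0 along U. Then there exists G ∈ ℓ∞(I,E) with sup_{i∈I} ‖T(t)G(i) − G(i)‖ → 0 as t → 0⁺ (i.e. G ∈ m^T) such that ‖F(i) − G(i)‖ → 0 along U. (This is the classical formulation of the identification of the nonstandard F-product Ê_T with the classical F-product m^T/(c_U ∩ m^T).) -/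
open Filter Topology

/-!
Read over an ultrafilter, the hypothesis on `F` is an overspill principle: a failure of uniformity
would produce, by choosing bad times diagonally, an infinitesimal family `h` with
`T (h i) (F i) - F i` not infinitesimal. Hence `T t (F i) → F i` uniformly as `t → 0⁺` and `i → U`,
so there are scales `δ 0 ≥ δ 1 ≥ ⋯` such that `T t (F i)` is `1 / (n + 1)`-close to `F i` on
`(0, δ n]` for `U`-almost all `i`. Replacing `F i` by its orbit average over `(0, δ N]`, where `N`
is the first index at which this estimate fails for `i`, keeps the estimates before `N` up to a
constant, while the averaging makes the orbit Lipschitz with a constant of order `1 / δ N`, which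
takes over from `N` on.
-/

section Filters

variable {ι α β : Type*}

theorem exists_tendsto_atTop_of_forall_eventually {l : Filter ι} {P : ℕ → ι → Prop}
    (hP : ∀ n, ∀ᶠ i in l, P n i) (hanti : ∀ i, Antitone (P · i)) (hfail : ∀ i, ∃ n, ¬P n i) :
    ∃ k : ι → ℕ, Tendsto k l atTop ∧ ∀ᶠ i in l, P (k i) i := by
  classical
  have lt_find {n : ℕ} {i : ι} (h : P n i) : n < Nat.find (hfail i) :=
    (Nat.lt_find_iff _ _).2 fun m hm => not_not.2 (hanti i hm h)
  refine ⟨fun i => Nat.find (hfail i) - 1, tendsto_atTop.2 fun n => ?_, ?_⟩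
  · filter_upwards [hP n] with i hi using Nat.le_sub_one_of_lt (lt_find hi)
  · filter_upwards [hP 0] with i hi
    exact not_not.1 (Nat.find_min (hfail i) (Nat.sub_one_lt (lt_find hi).ne_bot))

theorem tendsto_prod_ultrafilter_of_forall_tendsto {L : Filter α} [L.IsCountablyGenerated]
    {U : Ultrafilter ι} {M : Filter β} {φ : α → ι → β} (hφ : ∀ i, Tendsto (φ · i) L M)
    (hdiag : ∀ x : ι → α, Tendsto x U L → Tendsto (fun i => φ (x i) i) U M) :
    Tendsto (fun p : α × ι => φ p.1 p.2) (L ×ˢ U) M := by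
  obtain ⟨V, hV⟩ := L.exists_antitone_basis
  intro s hs
  by_contra hbad
  have eventually_bad : ∀ n, ∀ᶠ i in U, ∃ x ∈ V n, φ x i ∉ s := fun n => by
    have not_good : ¬∀ᶠ i in U, ∀ x ∈ V n, φ x i ∈ s := fun hgood =>
      hbad (mem_prod_iff_left.2 ⟨V n, hV.mem n, hgood⟩)
    simpa using Ultrafilter.eventually_not.2 not_good
  obtain ⟨k, hk, hkbad⟩ := exists_tendsto_atTop_of_forall_eventually eventually_bad
    (fun i m n hmn ⟨x, hx, hxs⟩ => ⟨x, hV.antitone hmn hx, hxs⟩)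
    (fun i => (hV.mem_iff.1 (hφ i hs)).imp fun n hn ⟨x, hx, hxs⟩ => hxs (hn hx))
  obtain ⟨x, hx⟩ := hkbad.choice
  have hxL : Tendsto x U L := fun t ht => by
    rw [mem_map]
    filter_upwards [hx, hk.eventually (hV.eventually_subset ht)] with i hi hit using hit hi.1
  obtain ⟨i, hi, his⟩ := (hx.and (hdiag x hxL hs)).exists
  exact hi.2 his

theorem exists_antitone_forall_Ioc_subset {S : ℕ → Set ℝ} (hS : ∀ n, S n ∈ 𝓝[>] (0 : ℝ)) :
    ∃ δ : ℕ → ℝ, Antitone δ ∧ (∀ n, δ n ∈ Set.Ioc 0 1) ∧ ∀ n, Set.Ioc 0 (δ n) ⊆ S n := by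
  have hev : ∀ n, ∀ᶠ k : ℕ in atTop, Set.Ioc 0 (1 / ((k : ℝ) + 1)) ⊆ S n := fun n => by
    obtain ⟨d, hd, hdS⟩ := mem_nhdsGT_iff_exists_Ioc_subset.1 (hS n)
    filter_upwards [tendsto_one_div_add_atTop_nhds_zero_nat.eventually_le_const
      (Set.mem_Ioi.1 hd)] with k hk
    exact (Set.Ioc_subset_Ioc_right hk).trans hdS
  obtain ⟨k, hk, hkS⟩ := extraction_forall_of_eventually hev
  refine ⟨fun n => 1 / ((k n : ℝ) + 1), fun m n hmn => ?_, fun n => ⟨by positivity, ?_⟩, hkS⟩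
  · exact Nat.one_div_le_one_div (hk.monotone hmn)
  · exact (div_le_one₀ (by positivity)).2 (by simp)

end Filters

theorem isBoundedUnder_norm_of_forall_apply {ι 𝕜 E F : Type*} [NontriviallyNormedField 𝕜]
    [SeminormedAddCommGroup E] [NormedSpace 𝕜 E] [CompleteSpace E]
    [SeminormedAddCommGroup F] [NormedSpace 𝕜 F] {l : Filter ι} [l.IsCountablyGenerated]
    {g : ι → E →L[𝕜] F} (hg : ∀ x, IsBoundedUnder (· ≤ ·) l fun i => ‖g i x‖) :
    IsBoundedUnder (· ≤ ·) l fun i => ‖g i‖ := by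
  obtain ⟨V, hV⟩ := l.exists_antitone_basis
  by_contra hunb
  have exists_large : ∀ n : ℕ, ∃ i ∈ V n, (n : ℝ) < ‖g i‖ := fun n => by
    by_contra! hle
    exact hunb ⟨n, eventually_map.2 (mem_of_superset (hV.mem n) hle)⟩
  choose i hiV hi using exists_large
  have bounded_apply (x : E) : ∃ C, ∀ n, ‖g (i n) x‖ ≤ C := by
    obtain ⟨C, hC⟩ := hg x
    have hbdd : IsBoundedUnder (· ≤ ·) atTop fun n => ‖g (i n) x‖ :=
      ⟨C, eventually_map.2 ((hV.tendsto hiV).eventually (eventually_map.1 hC))⟩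
    exact hbdd.bddAbove_range.imp fun _ hB n => hB ⟨n, rfl⟩
  obtain ⟨C, hC⟩ := banach_steinhaus bounded_apply
  obtain ⟨n, hn⟩ := exists_nat_gt C
  exact ((hn.trans (hi n)).trans_le (hC n)).false

theorem tendsto_iSup_norm_sub_of_tendstoUniformly {ι β E : Type*} [SeminormedAddCommGroup E]
    {l : Filter ι} {F : ι → β → E} {f : β → E} (hF : TendstoUniformly F f l) :
    Tendsto (fun n => ⨆ x, ‖F n x - f x‖) l (𝓝 0) := by
  refine Metric.tendsto_nhds.2 fun ε hε => ?_
  filter_upwards [Metric.tendstoUniformly_iff.1 hF (ε / 2) (half_pos hε)] with n hn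
  rw [Real.dist_0_eq_abs, abs_of_nonneg (Real.iSup_nonneg fun x => norm_nonneg _)]
  refine (Real.iSup_le (fun x => ?_) (half_pos hε).le).trans_lt (half_lt_self hε)
  exact (dist_eq_norm' (f x) (F n x) ▸ hn x).le

theorem exists_antitone_forall_eventually_norm_sub_le {ι E : Type*} [SeminormedAddCommGroup E]
    {l : Filter ι} {φ : ℝ → ι → E} {F : ι → E} (hφ : TendstoUniformlyOnFilter φ F (𝓝[>] 0) l) :
    ∃ δ : ℕ → ℝ, Antitone δ ∧ (∀ n, δ n ∈ Set.Ioc 0 1) ∧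
      ∀ n : ℕ, ∀ᶠ i in l, ∀ t ∈ Set.Ioc 0 (δ n), ‖φ t i - F i‖ ≤ 1 / ((n : ℝ) + 1) := by
  have hunif (n : ℕ) : ∃ S ∈ 𝓝[>] (0 : ℝ), ∀ᶠ i in l, ∀ t ∈ S,
      ‖φ t i - F i‖ ≤ 1 / ((n : ℝ) + 1) := by
    obtain ⟨S, hS, hlS⟩ := mem_prod_iff_left.1
      (Metric.tendstoUniformlyOnFilter_iff.1 hφ _ (Nat.one_div_pos_of_nat (n := n)))
    exact ⟨S, hS, hlS.mono fun i hi t ht =>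
      (dist_eq_norm' (F i) (φ t i)).symm.trans_le (le_of_lt (hi t ht))⟩
  choose S hS hlS using hunif
  obtain ⟨δ, hδ, hδ01, hδS⟩ := exists_antitone_forall_Ioc_subset hS
  exact ⟨δ, hδ, hδ01, fun n => (hlS n).mono fun i hi t ht => hi t (hδS n ht)⟩

section Semigroup

variable {E : Type*} [NormedAddCommGroup E] [NormedSpace ℝ E]

/-- A strongly continuous one-parameter semigroup of bounded operators on `E`. It is indexed by `ℝ`,
but only the operators `T t` with `0 ≤ t` are constrained. -/
structure IsC0Semigroup (T : ℝ → E →L[ℝ] E) : Prop where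
  map_zero : T 0 = 1
  map_add : ∀ s t : ℝ, 0 ≤ s → 0 ≤ t → T (s + t) = (T s).comp (T t)
  tendsto_apply : ∀ f : E, Tendsto (fun t => T t f) (𝓝[>] 0) (𝓝 f)

/-- The mean of the orbit of `f` under `T` over the time interval `(0, r]`; it regularizes `f`. -/
noncomputable def orbitAverage (T : ℝ → E →L[ℝ] E) (r : ℝ) (f : E) : E :=
  ⨍ s in (0 : ℝ)..r, T s f

namespace IsC0Semigroup

variable {T : ℝ → E →L[ℝ] E} (hT : IsC0Semigroup T)
include hT

theorem apply_add {s t : ℝ} (hs : 0 ≤ s) (ht : 0 ≤ t) (f : E) : T (s + t) f = T s (T t f) :=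
  congrArg (· f) (hT.map_add s t hs ht)

theorem apply_comm {s t : ℝ} (hs : 0 ≤ s) (ht : 0 ≤ t) (f : E) : T s (T t f) = T t (T s f) := by
  rw [← hT.apply_add hs ht, add_comm, hT.apply_add ht hs]

theorem map_nat_mul {t : ℝ} (ht : 0 ≤ t) (n : ℕ) : T (n * t) = T t ^ n := by
  induction n with
  | zero => simpa using hT.map_zero
  | succ n ih =>
    rw [Nat.cast_succ, add_one_mul, hT.map_add _ _ (by positivity) ht, ih, pow_succ]
    rfl

theorem exists_norm_le [CompleteSpace E] (b : ℝ) :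
    ∃ M, 1 ≤ M ∧ ∀ t ∈ Set.Icc 0 b, ‖T t‖ ≤ M := by
  obtain ⟨C, hC⟩ := isBoundedUnder_norm_of_forall_apply fun f =>
    (hT.tendsto_apply f).norm.isBoundedUnder_le
  obtain ⟨a, ha, haC⟩ := mem_nhdsGT_iff_exists_Ioc_subset.1 (eventually_map.1 hC)
  obtain ⟨N, hN⟩ := exists_nat_gt (b / a)
  refine ⟨max C 1 ^ (N + 1), one_le_pow₀ (le_max_right _ _), fun t ht => ?_⟩
  have ha : 0 < a := ha
  set s : ℝ := t / (N + 1 : ℕ)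
  have hs : 0 ≤ s := div_nonneg ht.1 (by positivity)
  have hsa : s ≤ a := by
    rw [div_lt_iff₀ ha] at hN
    rw [div_le_iff₀ (by positivity)]
    push_cast
    linarith [ht.2]
  have hTs : ‖T s‖ ≤ max C 1 := by
    rcases hs.eq_or_lt with h0 | hpos
    · rw [← h0, hT.map_zero]
      exact ContinuousLinearMap.norm_id_le.trans (le_max_right _ _)
    · exact (haC ⟨hpos, hsa⟩).trans (le_max_left _ _)
  calc ‖T t‖ = ‖T s ^ (N + 1)‖ := by rw [← hT.map_nat_mul hs, mul_div_cancel₀ t (by positivity)]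
    _ ≤ ‖T s‖ ^ (N + 1) := norm_pow_le' _ N.succ_pos
    _ ≤ max C 1 ^ (N + 1) := by gcongr

theorem norm_apply_sub_apply_le {b M : ℝ} (hM : ∀ t ∈ Set.Icc 0 b, ‖T t‖ ≤ M) (f : E) {s u : ℝ}
    (hs : s ∈ Set.Icc 0 b) (hu : u ∈ Set.Icc 0 b) :
    ‖T u f - T s f‖ ≤ M * ‖T |u - s| f - f‖ := by
  wlog hsu : s ≤ u generalizing s u
  · rw [norm_sub_rev, abs_sub_comm]
    exact this hu hs (le_of_not_ge hsu)
  have hu_eq : T u f = T s (T |u - s| f) := by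
    rw [← hT.apply_add hs.1 (abs_nonneg _), abs_of_nonneg (sub_nonneg.2 hsu), add_sub_cancel]
  rw [hu_eq, ← map_sub]
  exact (T s).le_of_opNorm_le (hM s hs) _

theorem continuousWithinAt_apply_zero (f : E) :
    ContinuousWithinAt (fun t => T t f) (Set.Ici 0) 0 := by
  refine continuousWithinAt_Ioi_iff_Ici.1 ?_
  simpa [ContinuousWithinAt, hT.map_zero] using hT.tendsto_apply f

theorem continuousOn_apply [CompleteSpace E] (f : E) :
    ContinuousOn (fun t => T t f) (Set.Ici 0) := by
  intro s hs
  obtain ⟨M, -, hM⟩ := hT.exists_norm_le (s + 1)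
  have habs : Tendsto (fun u => |u - s|) (𝓝[Set.Ici 0] s) (𝓝[Set.Ici 0] 0) := by
    refine tendsto_nhdsWithin_iff.2 ⟨?_, Eventually.of_forall fun u => Set.mem_Ici.2 (abs_nonneg _)⟩
    exact (Continuous.tendsto' (by fun_prop) _ _ (by simp)).mono_left nhdsWithin_le_nhds
  have hlim : Tendsto (fun u => M * ‖T |u - s| f - f‖) (𝓝[Set.Ici 0] s) (𝓝 0) := by
    have h0 := (hT.continuousWithinAt_apply_zero f).tendsto.comp habs
    simp only [hT.map_zero, one_apply_eq_self] at h0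
    simpa using (tendsto_iff_norm_sub_tendsto_zero.1 h0).const_mul M
  refine tendsto_iff_norm_sub_tendsto_zero.2 (squeeze_zero' (.of_forall fun _ => norm_nonneg _) ?_
    hlim)
  filter_upwards [self_mem_nhdsWithin, nhdsWithin_le_nhds (Iic_mem_nhds (lt_add_one s))]
    with u hu0 hu
  exact hT.norm_apply_sub_apply_le hM f ⟨hs, by linarith⟩ ⟨hu0, hu⟩

theorem intervalIntegrable_apply [CompleteSpace E] (f : E) {a b : ℝ} (ha : 0 ≤ a) (hb : 0 ≤ b) :
    IntervalIntegrable (fun t => T t f) MeasureTheory.volume a b :=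
  ((hT.continuousOn_apply f).mono fun _ ht => (le_min ha hb).trans ht.1).intervalIntegrable

theorem map_integral [CompleteSpace E] (f : E) (t : ℝ) {r : ℝ} (hr : 0 ≤ r) :
    T t (∫ s in 0..r, T s f) = ∫ s in 0..r, T t (T s f) :=
  ((T t).intervalIntegral_comp_comm (hT.intervalIntegrable_apply f le_rfl hr)).symm

theorem integral_zero_add [CompleteSpace E] (f : E) {t r : ℝ} (ht : 0 ≤ t) (hr : 0 ≤ r) :
    ∫ s in 0..t + r, T s f = (∫ s in 0..t, T s f) + T t (∫ s in 0..r, T s f) := by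
  have hshift : T t (∫ s in 0..r, T s f) = ∫ s in t..t + r, T s f := by
    calc T t (∫ s in 0..r, T s f) = ∫ s in 0..r, T (t + s) f := by
          rw [hT.map_integral f t hr]
          refine intervalIntegral.integral_congr fun s hs => ?_
          rw [Set.uIcc_of_le hr] at hs
          exact (hT.apply_add ht hs.1 f).symm
      _ = ∫ s in t..t + r, T s f := by
          rw [intervalIntegral.integral_comp_add_left (fun s => T s f), add_zero]
  rw [hshift, intervalIntegral.integral_add_adjacent_intervals]
  · exact hT.intervalIntegrable_apply f le_rfl ht
  · exact hT.intervalIntegrable_apply f ht (add_nonneg ht hr)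

section OrbitAverage

variable [CompleteSpace E]

theorem orbitAverage_mem {r : ℝ} (hr : 0 < r) {f : E} {K : Set E} (hK : Convex ℝ K)
    (hK' : IsClosed K) (h : ∀ s ∈ Set.Ioc 0 r, T s f ∈ K) : orbitAverage T r f ∈ K := by
  have huIoc : Set.uIoc 0 r = Set.Ioc 0 r := Set.uIoc_of_le hr.le
  refine hK.set_average_mem hK' (by simp [huIoc, hr]) (by simp [huIoc]) ?_
    (intervalIntegrable_iff.1 (hT.intervalIntegrable_apply f le_rfl hr.le))
  exact MeasureTheory.ae_restrict_of_forall_mem measurableSet_uIoc (huIoc ▸ h)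

theorem norm_orbitAverage_sub_le {r ε : ℝ} (hr : 0 < r) {f : E}
    (h : ∀ s ∈ Set.Ioc 0 r, ‖T s f - f‖ ≤ ε) : ‖orbitAverage T r f - f‖ ≤ ε :=
  mem_closedBall_iff_norm.1 <| hT.orbitAverage_mem hr (convex_closedBall f ε)
    Metric.isClosed_closedBall fun s hs => mem_closedBall_iff_norm.2 (h s hs)

theorem norm_orbitAverage_le {r M : ℝ} (hr : 0 < r) (hM : ∀ s ∈ Set.Ioc 0 r, ‖T s‖ ≤ M) (f : E) :
    ‖orbitAverage T r f‖ ≤ M * ‖f‖ :=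
  mem_closedBall_zero_iff.1 <| hT.orbitAverage_mem hr (convex_closedBall 0 _)
    Metric.isClosed_closedBall fun s hs =>
      mem_closedBall_zero_iff.2 ((T s).le_of_opNorm_le (hM s hs) f)

theorem map_orbitAverage_sub {r t : ℝ} (hr : 0 ≤ r) (ht : 0 ≤ t) (f : E) :
    T t (orbitAverage T r f) - orbitAverage T r f = orbitAverage T r (T t f - f) := by
  simp only [orbitAverage, interval_average_eq, map_smul, hT.map_integral f t hr, ← smul_sub,
    map_sub]
  rw [intervalIntegral.integral_sub (hT.intervalIntegrable_apply _ le_rfl hr)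
    (hT.intervalIntegrable_apply _ le_rfl hr)]
  congr 2
  refine intervalIntegral.integral_congr fun s hs => ?_
  rw [Set.uIcc_of_le hr] at hs
  exact hT.apply_comm ht hs.1 f

-- Both sides of `∫₀ᵗ + T t ∫₀ʳ = ∫₀ᵗ⁺ʳ = ∫₀ʳ + T r ∫₀ᵗ` are divided by `r`.
theorem map_orbitAverage_sub_eq_smul {r t : ℝ} (hr : 0 < r) (ht : 0 < t) (f : E) :
    T t (orbitAverage T r f) - orbitAverage T r f =
      (t / r) • (T r (orbitAverage T t f) - orbitAverage T t f) := by
  have hcocycle : (∫ s in 0..t, T s f) + T t (∫ s in 0..r, T s f) =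
      (∫ s in 0..r, T s f) + T r (∫ s in 0..t, T s f) := by
    rw [← hT.integral_zero_add f ht.le hr.le, add_comm t r, hT.integral_zero_add f hr.le ht.le]
  simp only [orbitAverage, interval_average_eq, sub_zero, map_smul, ← smul_sub, smul_smul]
  rw [div_mul_eq_mul_div, mul_inv_cancel₀ ht.ne', one_div]
  congr 1
  rw [sub_eq_sub_iff_add_eq_add, add_comm, hcocycle, add_comm]

theorem norm_map_orbitAverage_sub_le {r t M : ℝ} (hr : 0 < r)
    (hM : ∀ s ∈ Set.Ioc 0 r, ‖T s‖ ≤ M) (ht : 0 ≤ t) (f : E) :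
    ‖T t (orbitAverage T r f) - orbitAverage T r f‖ ≤ M * ‖T t f - f‖ :=
  hT.map_orbitAverage_sub hr.le ht f ▸ hT.norm_orbitAverage_le hr hM _

theorem norm_map_orbitAverage_sub_le_div_mul {r t M : ℝ} (hr : 0 < r) (ht : 0 < t)
    (hM : ∀ s ∈ Set.Ioc 0 t, ‖T s‖ ≤ M) (f : E) :
    ‖T t (orbitAverage T r f) - orbitAverage T r f‖ ≤ t / r * (M * ‖T r f - f‖) := by
  rw [hT.map_orbitAverage_sub_eq_smul hr ht, norm_smul, Real.norm_of_nonneg (by positivity)]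
  gcongr
  exact hT.norm_map_orbitAverage_sub_le ht hM hr.le f

theorem exists_regularization {M : ℝ} (hM1 : 1 ≤ M) (hM : ∀ t ∈ Set.Icc 0 1, ‖T t‖ ≤ M)
    {δ ε : ℕ → ℝ} (hδ : Antitone δ) (hδ01 : ∀ n, δ n ∈ Set.Ioc 0 1) (f : E) :
    ∃ g : E, ‖g‖ ≤ M * ‖f‖ ∧
      (∀ n, (∀ m ≤ n, ∀ t ∈ Set.Ioc 0 (δ m), ‖T t f - f‖ ≤ ε m) → ‖g - f‖ ≤ ε n) ∧
      ∀ n, ∀ t ∈ Set.Ioc 0 (δ n),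
        ‖T t g - g‖ ≤ max (M * ε n) (t / δ n * (M * ((M + 1) * ‖f‖))) := by
  classical
  by_cases hfail : ∃ n, ¬∀ t ∈ Set.Ioc 0 (δ n), ‖T t f - f‖ ≤ ε n
  swap
  · push Not at hfail
    have hε (n : ℕ) : 0 ≤ ε n := (norm_nonneg _).trans (hfail n _ ⟨(hδ01 n).1, le_rfl⟩)
    exact ⟨f, le_mul_of_one_le_left (norm_nonneg f) hM1, fun n _ => by simpa using hε n,
      fun n t ht => le_max_of_le_left <|
        (hfail n t ht).trans (le_mul_of_one_le_left (hε n) hM1)⟩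
  set N := Nat.find hfail
  have hMIoc {r : ℝ} (hr : r ≤ 1) : ∀ s ∈ Set.Ioc 0 r, ‖T s‖ ≤ M := fun s hs =>
    hM s ⟨hs.1.le, hs.2.trans hr⟩
  have hMN := hMIoc (hδ01 N).2
  refine ⟨orbitAverage T (δ N) f, hT.norm_orbitAverage_le (hδ01 N).1 hMN f, fun n hn => ?_,
    fun n t ht => ?_⟩
  · have hnN : n < N := (Nat.lt_find_iff _ _).2 fun m hm => not_not.2 (hn m hm)
    exact hT.norm_orbitAverage_sub_le (hδ01 N).1 fun s hs =>
      hn n le_rfl s (Set.Ioc_subset_Ioc_right (hδ hnN.le) hs)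
  rcases lt_or_ge n N with hnN | hNn
  · refine le_max_of_le_left ((hT.norm_map_orbitAverage_sub_le (hδ01 N).1 hMN ht.1.le f).trans ?_)
    gcongr
    exact not_not.1 (Nat.find_min hfail hnN) t ht
  · refine le_max_of_le_right ((hT.norm_map_orbitAverage_sub_le_div_mul (hδ01 N).1 ht.1
      (hMIoc (ht.2.trans (hδ01 n).2)) f).trans ?_)
    have hdiff : ‖T (δ N) f - f‖ ≤ (M + 1) * ‖f‖ := by
      rw [add_one_mul]
      exact norm_sub_le_of_le ((T (δ N)).le_of_opNorm_le (hMN _ ⟨(hδ01 N).1, le_rfl⟩) f) le_rfl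
    have := ht.1
    have := (hδ01 n).1
    gcongr
    exact hδ hNn

end OrbitAverage

theorem tendstoUniformlyOnFilter_ultrafilter {I : Type*} {U : Ultrafilter I} {F : I → E}
    (hF : ∀ h : I → ℝ, (∀ i, 0 ≤ h i) → Tendsto h U (𝓝 0) →
      Tendsto (fun i => ‖T (h i) (F i) - F i‖) U (𝓝 0)) :
    TendstoUniformlyOnFilter (fun t i => T t (F i)) F (𝓝[>] 0) U := by
  refine tendstoUniformlyOnFilter_iff_tendsto.2 (tendsto_prod_ultrafilter_of_forall_tendsto
    (φ := fun t i => (F i, T t (F i)))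
    (fun i => Uniform.tendsto_nhds_right.1 (hT.tendsto_apply (F i))) fun h hh => ?_)
  obtain ⟨hh0, hhpos⟩ := tendsto_nhdsWithin_iff.1 hh
  have hmax : (fun i => max (h i) 0) =ᶠ[U] h := hhpos.mono fun i hi => max_eq_left (le_of_lt hi)
  refine tendsto_uniformity_iff_dist_tendsto_zero.2 ?_
  refine (hF _ (fun i => le_max_right _ _) (hh0.congr' hmax.symm)).congr' ?_
  filter_upwards [hmax] with i hi
  rw [hi, dist_eq_norm']

theorem exists_tendstoUniformly_of_tendstoUniformlyOnFilter [CompleteSpace E] {I : Type*}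
    {l : Filter I} {F : I → E} {C : ℝ} (hC : ∀ i, ‖F i‖ ≤ C)
    (hF : TendstoUniformlyOnFilter (fun t i => T t (F i)) F (𝓝[>] 0) l) :
    ∃ G : I → E, (∃ C : ℝ, ∀ i, ‖G i‖ ≤ C) ∧
      TendstoUniformly (fun t i => T t (G i)) G (𝓝[>] 0) ∧
      Tendsto (fun i => ‖F i - G i‖) l (𝓝 0) := by
  obtain ⟨M, hM1, hM⟩ := hT.exists_norm_le 1
  obtain ⟨δ, hδ, hδ01, hlδ⟩ := exists_antitone_forall_eventually_norm_sub_le hF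
  choose G hGnorm hGnear hGreg using fun i =>
    hT.exists_regularization (ε := fun n => 1 / ((n : ℝ) + 1)) hM1 hM hδ hδ01 (F i)
  refine ⟨G, ⟨M * C, fun i => (hGnorm i).trans (by gcongr; exact hC i)⟩, ?_, ?_⟩
  · refine Metric.tendstoUniformly_iff.2 fun ε hε => ?_
    have hMε : Tendsto (fun n : ℕ => M * (1 / ((n : ℝ) + 1))) atTop (𝓝 0) := by
      simpa using (tendsto_one_div_add_atTop_nhds_zero_nat (𝕜 := ℝ)).const_mul M
    obtain ⟨n, hn⟩ := (hMε.eventually_lt_const hε).exists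
    have hlip : Tendsto (fun t => t / δ n * (M * ((M + 1) * C))) (𝓝[>] 0) (𝓝 0) :=
      (Continuous.tendsto' (by fun_prop) _ _ (by simp)).mono_left nhdsWithin_le_nhds
    filter_upwards [Ioc_mem_nhdsGT (hδ01 n).1, hlip.eventually_lt_const hε] with t ht htε i
    rw [dist_eq_norm']
    refine (hGreg i n t ht).trans_lt (max_lt hn (lt_of_le_of_lt ?_ htε))
    have := (div_pos ht.1 (hδ01 n).1).le
    gcongr
    exact hC i
  · refine Metric.tendsto_nhds.2 fun ε hε => ?_
    obtain ⟨n, hn⟩ := exists_nat_one_div_lt hε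
    filter_upwards [(eventually_all_finite (Set.finite_Iic n)).2 fun m _ => hlδ m] with i hi
    rw [dist_zero_right, norm_norm, norm_sub_rev]
    exact (hGnear i n hi).trans_lt hn

end IsC0Semigroup

end Semigroup

theorem nonstandard_hull_eq_F_product_classical_general
    {E : Type*} [NormedAddCommGroup E] [NormedSpace ℝ E] [CompleteSpace E]
    {T : ℝ → E →L[ℝ] E} (hT : IsC0Semigroup T) {I : Type*} (U : Ultrafilter I)
    {F : I → E} (hFbd : ∃ C : ℝ, ∀ i : I, ‖F i‖ ≤ C)
    (hF : ∀ h : I → ℝ, (∀ i, 0 ≤ h i) → Tendsto h (U : Filter I) (𝓝 0) →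
      Tendsto (fun i : I => ‖T (h i) (F i) - F i‖) (U : Filter I) (𝓝 0)) :
    ∃ G : I → E, (∃ C : ℝ, ∀ i : I, ‖G i‖ ≤ C) ∧
      Tendsto (fun t : ℝ => ⨆ i : I, ‖T t (G i) - G i‖) (𝓝[>] (0 : ℝ)) (𝓝 0) ∧
      Tendsto (fun i : I => ‖F i - G i‖) (U : Filter I) (𝓝 0) := by
  obtain ⟨C, hC⟩ := hFbd
  obtain ⟨G, hGbd, hG, hFG⟩ := hT.exists_tendstoUniformly_of_tendstoUniformlyOnFilter hC
    (hT.tendstoUniformlyOnFilter_ultrafilter hF)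
  exact ⟨G, hGbd, tendsto_iSup_norm_sub_of_tendstoUniformly hG, hFG⟩

theorem nonstandard_hull_eq_F_product_classical
    (E : Type*) [NormedAddCommGroup E] [NormedSpace ℝ E] [CompleteSpace E]
    (T : ℝ → E →L[ℝ] E)
    (hT0 : T 0 = 1)
    (hTadd : ∀ s t : ℝ, 0 ≤ s → 0 ≤ t → T (s + t) = (T s).comp (T t))
    (hTcont : ∀ f : E,
      Tendsto (fun t : ℝ => ‖T t f - f‖) (𝓝[>] (0 : ℝ)) (𝓝 0))
    (I : Type*) (U : Ultrafilter I)
    (hU : ∃ A : ℕ → Set I, (∀ n, A n ∈ U) ∧ (⋂ n, A n) ∉ U)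
    (F : I → E) (hFbd : ∃ C : ℝ, ∀ i : I, ‖F i‖ ≤ C)
    (hF : ∀ h : I → ℝ, (∀ i, 0 ≤ h i) → Tendsto h (U : Filter I) (𝓝 0) →
      Tendsto (fun i : I => ‖T (h i) (F i) - F i‖) (U : Filter I) (𝓝 0)) :
    ∃ G : I → E, (∃ C : ℝ, ∀ i : I, ‖G i‖ ≤ C) ∧
      Tendsto (fun t : ℝ => ⨆ i : I, ‖T t (G i) - G i‖) (𝓝[>] (0 : ℝ)) (𝓝 0) ∧
      Tendsto (fun i : I => ‖F i - G i‖) (U : Filter I) (𝓝 0) :=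
  nonstandard_hull_eq_F_product_classical_general
    ⟨hT0, hTadd, fun f => tendsto_iff_norm_sub_tendsto_zero.2 (hTcont f)⟩ U hFbd hF
end
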